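/- For all positive integers k and all a,b ∈ I: φ_R(r_k^{gl(m+1|n)}(a,b)) = F_k(a,b) + D_k(a,b); φ_R(r_k^{gl(m+1|n)}(a,0)) = A_k(1)(t_a∂_0⊗1) − E_k(a) − ((t_a/t_0)⊗1)·Σ_{s=2}^{k} A_k(s)B(s); φ_R(r_k^{gl(m+1|n)}(0,b)) = F_k(0,b); and φ_R(r_k^{gl(m+1|n)}(0,0)) = A_k(1)(t_0∂_0⊗1) + R^k − Σ_{s=2}^{k} A_k(s)B(s). -/

import Mathlib

set_option maxHeartbeats 1000000
set_option synthInstance.maxHeartbeats 400000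

noncomputable section
open scoped TensorProduct

/-- The index set `I = {1,…,m,1̄,…,n̄}` of `gl(m|n)`; `Sum.inl` are the even
(unbarred) indices, `Sum.inr` the odd (barred) ones.  The index set
`Î = {0} ∪ I` of `gl(m+1|n)` is realized as `Ind (m+1) n`, with `0 = Sum.inl 0`. -/
abbrev Ind (m n : ℕ) := Fin m ⊕ Fin n

/-- Parity of an index, as `0` or `1`. -/
def pI {m n : ℕ} : Ind m n → ℕ := Sum.elim (fun _ => 0) (fun _ => 1)

/-- The total order `1 < ⋯ < m < 1̄ < ⋯ < n̄` on `I` (and, with `m+1` in place of `m`,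
the order `0 < 1 < ⋯ < m < 1̄ < ⋯ < n̄` on `Î`). -/
def iltI {m n : ℕ} : Ind m n → Ind m n → Prop
  | Sum.inl a, Sum.inl b => a < b
  | Sum.inl _, Sum.inr _ => True
  | Sum.inr _, Sum.inl _ => False
  | Sum.inr a, Sum.inr b => a < b

/-- The distinguished index `0` of `Î`. -/
def z0 {m n : ℕ} : Ind (m+1) n := Sum.inl 0

/-- The inclusion `I ↪ Î`. -/
def emb {m n : ℕ} : Ind m n → Ind (m+1) n := Sum.map Fin.succ id

lemma emb_injective {m n : ℕ} : Function.Injective (emb (m := m) (n := n)) := by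
  intro a b h
  cases a <;> cases b <;> simp [emb, Fin.succ_inj] at h <;> simp [h]

lemma emb_ne_z0 {m n : ℕ} (a : Ind m n) : emb a ≠ z0 := by
  cases a <;> simp [emb, z0, Fin.succ_ne_zero]

/-- Builds a linear map out of a space with basis `α` from a function on basis vectors. -/
def mkOp {α M : Type} [AddCommGroup M] [Module ℂ M] (g : α → M) : (α →₀ ℂ) →ₗ[ℂ] M :=
  Finsupp.lsum ℂ fun x => LinearMap.toSpanSingleton ℂ M (g x)

/-- Number of odd variables occurring before position `i`. -/
def cntB {n : ℕ} (b : Fin n → Bool) (i : Fin n) : ℕ :=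
  (Finset.univ.filter fun j => j < i ∧ b j = true).card

/-- Number of odd variables occurring. -/
def cntA {n : ℕ} (b : Fin n → Bool) : ℕ := (Finset.univ.filter fun j => b j = true).card


/-- The defining (super-)commutation relations of `gl`:
`e_ij e_kl − (−1)^{(|i|+|j|)(|k|+|l|)} e_kl e_ij = δ_jk e_il − (−1)^{(|i|+|j|)(|k|+|l|)} δ_li e_kj`. -/
inductive glRel (ι : Type) (p : ι → ℕ) [DecidableEq ι] :
    FreeAlgebra ℂ (ι × ι) → FreeAlgebra ℂ (ι × ι) → Prop
  | basic (i j k l : ι) : glRel ι p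
      (FreeAlgebra.ι ℂ (i, j) * FreeAlgebra.ι ℂ (k, l)
        - ((-1 : ℂ) ^ ((p i + p j) * (p k + p l))) •
            (FreeAlgebra.ι ℂ (k, l) * FreeAlgebra.ι ℂ (i, j)))
      ((if j = k then FreeAlgebra.ι ℂ (i, l) else 0)
        - ((-1 : ℂ) ^ ((p i + p j) * (p k + p l))) •
            (if l = i then FreeAlgebra.ι ℂ (k, j) else 0))

/-- The universal enveloping superalgebra of the general linear Lie superalgebra with
index set `ι` and parity `p`, presented by generators `e_ij` and the super-commutator
relations. -/
abbrev UEA (ι : Type) (p : ι → ℕ) [DecidableEq ι] : Type := RingQuot (glRel ι p)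

/-- The generator `e_ij` of `UEA ι p`. -/
def gen {ι : Type} (p : ι → ℕ) [DecidableEq ι] (i j : ι) : UEA ι p :=
  RingQuot.mkAlgHom ℂ (glRel ι p) (FreeAlgebra.ι ℂ (i, j))

/-- Monomials `t_0^{k} t^e t̄^b` of `F = ℂ[t_0^{±1},t_1,…,t_m] ⊗ Λ_n`. -/
abbrev FMon (m n : ℕ) := ℤ × (Fin m → ℕ) × (Fin n → Bool)

/-- `F = ℂ[t_0^{±1},t_1,…,t_m] ⊗ Λ_n` as the vector space with basis the monomials. -/
abbrev FSp (m n : ℕ) : Type := FMon m n →₀ ℂ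

/-- The basis monomial of `F` attached to `x`. -/
def fmono {m n : ℕ} (x : FMon m n) : FSp m n := Finsupp.single x 1

/-- Left multiplication by `t_i/t_0` for an even index `i ∈ {1,…,m}`. -/
def opDivE {m n : ℕ} (i : Fin m) : Module.End ℂ (FSp m n) :=
  mkOp fun x => fmono (x.1 - 1, Function.update x.2.1 i (x.2.1 i + 1), x.2.2)

/-- Left multiplication by `t_ī/t_0` for an odd index `ī`. -/
def opDivO {m n : ℕ} (i : Fin n) : Module.End ℂ (FSp m n) :=
  mkOp fun x => if x.2.2 i then 0 else
    ((-1 : ℂ) ^ (cntB x.2.2 i)) • fmono (x.1 - 1, x.2.1, Function.update x.2.2 i true)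

/-- The operator `t_0 ∂_0`. -/
def opPar0 {m n : ℕ} : Module.End ℂ (FSp m n) :=
  mkOp fun x => (x.1 : ℂ) • fmono x

/-- The operator `t_0 ∂_i` for an even index `i ∈ {1,…,m}`. -/
def opParE {m n : ℕ} (i : Fin m) : Module.End ℂ (FSp m n) :=
  mkOp fun x => (x.2.1 i : ℂ) • fmono (x.1 + 1, Function.update x.2.1 i (x.2.1 i - 1), x.2.2)

/-- The operator `t_0 ∂_ī` for an odd index `ī`. -/
def opParO {m n : ℕ} (i : Fin n) : Module.End ℂ (FSp m n) :=
  mkOp fun x => if x.2.2 i then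
    ((-1 : ℂ) ^ (cntB x.2.2 i)) • fmono (x.1 + 1, x.2.1, Function.update x.2.2 i false) else 0

/-- The multiplication operators `t_i/t_0`, `i ∈ I`. -/
def opDiv {m n : ℕ} : Ind m n → Module.End ℂ (FSp m n) := Sum.elim opDivE opDivO

/-- The operators `t_0 ∂_i`, `i ∈ Î`. -/
def opPar {m n : ℕ} : Ind (m+1) n → Module.End ℂ (FSp m n) :=
  Sum.elim (Fin.cases opPar0 opParE) opParO

/-- The multiplication operators `t_i/t_0` for `i ∈ Î` (equal to `1` for `i = 0`). -/
def opDivB {m n : ℕ} : Ind (m+1) n → Module.End ℂ (FSp m n) :=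
  Sum.elim (Fin.cases 1 opDivE) opDivO

/-- The generators of `D'(m|n)`. -/
def Dgens (m n : ℕ) : Set (Module.End ℂ (FSp m n)) := Set.range opDiv ∪ Set.range opPar

/-- The superalgebra `D'(m|n)` of differential operators on `F`, i.e. the subalgebra of
operators on `F` generated by `t_i/t_0` (`i ∈ I`) and `t_0∂_i` (`i ∈ Î`). -/
def Dprime (m n : ℕ) : Subalgebra ℂ (Module.End ℂ (FSp m n)) := Algebra.adjoin ℂ (Dgens m n)

/-- `t_i/t_0` as an element of `D'(m|n)`. -/
def tdiv {m n : ℕ} (i : Ind m n) : Dprime m n :=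
  ⟨opDiv i, Algebra.subset_adjoin (Or.inl ⟨i, rfl⟩)⟩

/-- `t_0∂_i` as an element of `D'(m|n)`. -/
def tpar {m n : ℕ} (i : Ind (m+1) n) : Dprime m n :=
  ⟨opPar i, Algebra.subset_adjoin (Or.inr ⟨i, rfl⟩)⟩

/-- `t_i/t_0` for `i ∈ Î` as an element of `D'(m|n)`. -/
def tdivB {m n : ℕ} : Ind (m+1) n → Dprime m n :=
  Sum.elim (Fin.cases 1 fun i => tdiv (Sum.inl i)) fun i => tdiv (Sum.inr i)

/-- The operator `t_a∂_b = (t_a/t_0)(t_0∂_b)` of `D'(m|n)`, for `a, b ∈ Î`. -/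
def tdel {m n : ℕ} (a b : Ind (m+1) n) : Dprime m n := tdivB a * tpar b

/-- The Euler operator `E = Σ_{i∈Î} t_i∂_i ∈ D'(m|n)`. -/
def En (m n : ℕ) : Dprime m n := ∑ i : Ind (m+1) n, tdel i i

noncomputable instance instDprimeRing (m n : ℕ) : Ring (Dprime m n) :=
  @Subalgebra.toRing ℂ (Module.End ℂ (FSp m n)) inferInstance inferInstance inferInstance _

noncomputable instance instDprimeAlgebra (m n : ℕ) : Algebra ℂ (Dprime m n) :=
  @Subalgebra.algebra ℂ (Module.End ℂ (FSp m n)) inferInstance inferInstance inferInstance _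

/-- The super tensor product `D'(m|n) ⊗ U(gl(m|n))`, axiomatized: an algebra `T` together
with algebra maps `d ↦ d⊗1`, `u ↦ 1⊗u`, such that the induced linear map
`D'(m|n) ⊗_ℂ U(gl(m|n)) → T` is a linear isomorphism and such that the Koszul sign rule
`(1⊗u)(d⊗1) = (−1)^{|u||d|}(d⊗1)(1⊗u)` holds on (super-)generators. -/
structure SuperTensor (m n : ℕ) where
  T : Type
  [ringT : Ring T]
  [algT : Algebra ℂ T]
  inD : Dprime m n →ₐ[ℂ] T
  inU : UEA (Ind m n) pI →ₐ[ℂ] T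
  equiv : ((Dprime m n) ⊗[ℂ] (UEA (Ind m n) pI)) ≃ₗ[ℂ] T
  equiv_tmul : ∀ (d : Dprime m n) (u : UEA (Ind m n) pI), equiv (d ⊗ₜ u) = inD d * inU u
  comm_div : ∀ (i j k : Ind m n),
    inU (gen pI i j) * inD (tdiv k) =
      ((-1 : ℂ) ^ ((pI i + pI j) * pI k)) • (inD (tdiv k) * inU (gen pI i j))
  comm_par : ∀ (i j : Ind m n) (k : Ind (m+1) n),
    inU (gen pI i j) * inD (tpar k) =
      ((-1 : ℂ) ^ ((pI i + pI j) * pI k)) • (inD (tpar k) * inU (gen pI i j))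

attribute [instance] SuperTensor.ringT SuperTensor.algT

/-- The predicate expressing that `φ : U(gl(m+1|n)) → D'(m|n) ⊗ U(gl(m|n))` is given on the
generators `e_ab` by the formulas of Theorem 3.1 (for the central element `R`). -/
def IsPhi {m n : ℕ} (ST : SuperTensor m n) (R : ST.T)
    (φ : UEA (Ind (m+1) n) pI →ₐ[ℂ] ST.T) : Prop :=
  (∀ a b : Ind m n, φ (gen pI (emb a) (emb b)) =
      ST.inD (tdel (emb a) (emb b)) + ST.inU (gen pI a b)
        + (if a = b then ((-1 : ℂ) ^ (pI a * pI b)) • R else 0)) ∧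
  (∀ a : Ind m n, φ (gen pI (emb a) z0) =
      ST.inD (tdel (emb a) z0)
        - ∑ j : Ind m n, ((-1 : ℂ) ^ (pI a * pI j)) • (ST.inD (tdiv j) * ST.inU (gen pI a j))) ∧
  (∀ b : Ind m n, φ (gen pI z0 (emb b)) = ST.inD (tdel z0 (emb b))) ∧
  (φ (gen pI z0 z0) = ST.inD (tdel z0 z0) + R)

/-- The generating set of `U(sl(m+1|n))` inside `U(gl(m+1|n))`: the `e_ij` with `i ≠ j`
together with `e_00 − (−1)^{|a|} e_aa` for `a ∈ I`. -/
def slSet (m n : ℕ) : Set (UEA (Ind (m+1) n) pI) :=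
  {x | (∃ i j : Ind (m+1) n, i ≠ j ∧ x = gen pI i j) ∨
    (∃ a : Ind m n, x = gen pI z0 z0 - ((-1 : ℂ) ^ (pI a)) • gen pI (emb a) (emb a))}

/-- `U(sl(m+1|n))`, realized as the subalgebra of `U(gl(m+1|n))` generated by `sl(m+1|n)`. -/
def Usl (m n : ℕ) : Subalgebra ℂ (UEA (Ind (m+1) n) pI) := Algebra.adjoin ℂ (slSet m n)

lemma mem_gen_ne {m n : ℕ} {i j : Ind (m+1) n} (h : i ≠ j) : gen pI i j ∈ Usl m n :=
  Algebra.subset_adjoin (Or.inl ⟨i, j, h, rfl⟩)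

lemma mem_h {m n : ℕ} (a : Ind m n) :
    gen pI z0 z0 - ((-1 : ℂ) ^ (pI a)) • gen pI (emb a) (emb a) ∈ Usl m n :=
  Algebra.subset_adjoin (Or.inr ⟨a, rfl⟩)

/-- The predicate expressing that `ψ : U(sl(m+1|n)) → D'(m|n) ⊗ U(gl(m|n))` is given on the
generators by the formulas of Corollary 3.2 (the homomorphism `φ^s`). -/
def IsPhiS {m n : ℕ} (ST : SuperTensor m n) (ψ : Usl m n →ₐ[ℂ] ST.T) : Prop :=
  (∀ (a b : Ind m n) (h : a ≠ b),
    ψ ⟨gen pI (emb a) (emb b), mem_gen_ne fun he => h (emb_injective he)⟩ =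
      ST.inD (tdel (emb a) (emb b)) + ST.inU (gen pI a b)) ∧
  (∀ a : Ind m n, ψ ⟨gen pI (emb a) z0, mem_gen_ne (emb_ne_z0 a)⟩ =
      ST.inD (tdel (emb a) z0)
        - ∑ j : Ind m n, ((-1 : ℂ) ^ (pI a * pI j)) • (ST.inD (tdiv j) * ST.inU (gen pI a j))) ∧
  (∀ b : Ind m n, ψ ⟨gen pI z0 (emb b), mem_gen_ne (Ne.symm (emb_ne_z0 b))⟩ =
      ST.inD (tdel z0 (emb b))) ∧
  (∀ a : Ind m n, ψ ⟨gen pI z0 z0 - ((-1 : ℂ) ^ (pI a)) • gen pI (emb a) (emb a), mem_h a⟩ =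
      ST.inD (tdel (m:=m) (n:=n) z0 z0 - ((-1 : ℂ) ^ (pI a)) • tdel (emb a) (emb a))
        - ((-1 : ℂ) ^ (pI a)) • ST.inU (gen pI a a))

/-- The first Gelfand invariant `G₁ = Σ_i e_ii`. -/
def G1 (ι : Type) (p : ι → ℕ) [DecidableEq ι] [Fintype ι] : UEA ι p := ∑ i : ι, gen p i i

/-- The distinguished central element `R₁ = −(1/(m−n+1))(E⊗1 + 1⊗G₁)`. -/
def R1elt {m n : ℕ} (ST : SuperTensor m n) : ST.T :=
  -(1 / ((m : ℂ) - n + 1)) • (ST.inD (En m n) + ST.inU (G1 (Ind m n) pI))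

/-- The chain `a, v_1, …, v_k, b`. -/
def chainF {ι : Type} (a b : ι) {k : ℕ} (v : Fin k → ι) : Fin (k+2) → ι :=
  Fin.cons a (Fin.snoc v b)

/-- The elements `r_k(a,b) = Σ (−1)^{|i_1|+⋯+|i_{k-1}|} e_{a i_1} e_{i_1 i_2} ⋯ e_{i_{k-1} b}`,
with `r_0(a,b) = δ_{ab}(−1)^{|a||b|}`. -/
def rElt {ι A : Type} [Fintype ι] [DecidableEq ι] [Ring A] [Algebra ℂ A]
    (e : ι → ι → A) (p : ι → ℕ) : ℕ → ι → ι → A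
  | 0 => fun a b => if a = b then ((-1 : ℂ) ^ (p a * p b)) • (1 : A) else 0
  | (k+1) => fun a b => ∑ v : Fin k → ι, ((-1 : ℂ) ^ (∑ t, p (v t))) •
      (List.ofFn fun t : Fin (k+1) =>
        e (chainF a b v t.castSucc) (chainF a b v t.succ)).prod

/-- The Gelfand invariants `G_k = Σ_i r_k(i,i)` (for `k ≥ 1`). -/
def gelf {ι A : Type} [Fintype ι] [DecidableEq ι] [Ring A] [Algebra ℂ A]
    (e : ι → ι → A) (p : ι → ℕ) (k : ℕ) : A :=
  ∑ i : ι, rElt e p k i i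

/-- `R₂ = (E+m−n)⊗1`. -/
def R2elt {m n : ℕ} (ST : SuperTensor m n) : ST.T :=
  ST.inD (En m n) + ((m : ℂ) - n) • 1

/-- `A_k(s) = Σ_{g=0}^{k−s} C(k,g) R^g R₂^{k−s−g}`. -/
def AkT {m n : ℕ} (ST : SuperTensor m n) (R : ST.T) (k s : ℕ) : ST.T :=
  ∑ g ∈ Finset.range (k - s + 1), (k.choose g : ℂ) • (R ^ g * R2elt ST ^ (k - s - g))

/-- The element `∂_i t_j = (−1)^{|i||j|} t_j∂_i + δ_ij` of `D'(m|n)`. -/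
def ptD {m n : ℕ} (i j : Ind m n) : Dprime m n :=
  ((-1 : ℂ) ^ (pI i * pI j)) • tdel (emb j) (emb i) + (if i = j then 1 else 0)

/-- `B(s) = Σ_{i,j∈I} (−1)^{|i|(1+|j|)} ∂_i t_j ⊗ r_{s−1}(i,j)`. -/
def BT {m n : ℕ} (ST : SuperTensor m n) (s : ℕ) : ST.T :=
  ∑ i : Ind m n, ∑ j : Ind m n, ((-1 : ℂ) ^ (pI i * (1 + pI j))) •
    (ST.inD (ptD i j) * ST.inU (rElt (gen pI) pI (s - 1) i j))

/-- `D_k(a,b) = Σ_{g=0}^{k} C(k,g) R^g (1⊗r_{k−g}(a,b))`. -/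
def DkT {m n : ℕ} (ST : SuperTensor m n) (R : ST.T) (k : ℕ) (a b : Ind m n) : ST.T :=
  ∑ g ∈ Finset.range (k + 1), (k.choose g : ℂ) •
    (R ^ g * ST.inU (rElt (gen pI) pI (k - g) a b))

/-- `E_k(a) = Σ_{g=0}^{k−1} C(k,g) R^g Σ_{j∈I} (−1)^{|a||j|} (t_j/t_0)⊗r_{k−g}(a,j)`. -/
def EkT {m n : ℕ} (ST : SuperTensor m n) (R : ST.T) (k : ℕ) (a : Ind m n) : ST.T :=
  ∑ g ∈ Finset.range k, (k.choose g : ℂ) •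
    (R ^ g * ∑ j : Ind m n, ((-1 : ℂ) ^ (pI a * pI j)) •
      (ST.inD (tdiv j) * ST.inU (rElt (gen pI) pI (k - g) a j)))

/-- `f_s(a,b) = Σ_{i∈I} (−1)^{|i|} t_a∂_i ⊗ r_{s−1}(i,b)`, for `a ∈ Î`, `b ∈ I`. -/
def fsT {m n : ℕ} (ST : SuperTensor m n) (s : ℕ) (a : Ind (m+1) n) (b : Ind m n) : ST.T :=
  ∑ i : Ind m n, ((-1 : ℂ) ^ (pI i)) •
    (ST.inD (tdel a (emb i)) * ST.inU (rElt (gen pI) pI (s - 1) i b))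

/-- `F_k(a,b) = Σ_{s=1}^{k} f_s(a,b) A_k(s)`. -/
def FkT {m n : ℕ} (ST : SuperTensor m n) (R : ST.T) (k : ℕ)
    (a : Ind (m+1) n) (b : Ind m n) : ST.T :=
  ∑ s ∈ Finset.Icc 1 k, fsT ST s a b * AkT ST R k s


/-!
The signed matrix `M = ((−1)^{|y|} φ_R(e_xy))` over `Î` has the elements `φ_R(r_k(x,y))`, up to the
sign `(−1)^{|y|}`, as the entries of its `k`-th power. The formulas defining `φ_R` say that
`M = R + d w + Q`, where `d = (t_x/t_0)` is a column, `w = ((−1)^{|y|} t_0∂_y)` is a row, and `Q`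
is the signed matrix of generators of `gl(m|n)`, extended by a zero row and by the column `0` for
which `Q d = 0`. Moreover `w d = R_2`.

Since `Q d = 0`, a product of factors `d w` and `Q` vanishes as soon as `Q` stands immediately to
the left of `d w`, so that `(d w + Q)^k = Q^k + Σ_{s=1}^k d R_2^{k−s} w Q^{s−1}`. Both `R` and
`R_2` are central, the latter because every operator in `D'(m|n)` preserves the total degree.
The binomial theorem therefore yields
`M^k = Σ_g C(k,g) R^g Q^{k−g} + Σ_{s=1}^k d A_k(s) w Q^{s−1}`.
The entries of the first sum are `D_k`, `−E_k`, `0` and `R^k`, while those of `w Q^{s−1}` are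
`f_s(0,b)` and, for `s ≥ 2`, `−B(s)`.
-/

section Signs

variable {S : Type*} [Monoid S] [HasDistribNeg S]

lemma neg_one_pow_mul_neg_one_pow (k : ℕ) : (-1 : S) ^ k * (-1) ^ k = 1 := by
  rw [← (Commute.refl _).mul_pow, neg_one_mul, neg_neg, one_pow]

lemma neg_one_pow_mul_self (k : ℕ) : (-1 : S) ^ (k * k) = (-1) ^ k := by
  rw [pow_mul]
  rcases k.even_or_odd with h | h <;> simp [h.neg_one_pow]

lemma neg_one_pow_add_mul_telescope (a b c d : ℕ) :
    (-1 : S) ^ ((a + b) * d) * (-1) ^ ((b + c) * d) = (-1) ^ ((a + c) * d) := by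
  have hexp : (a + b) * d + (b + c) * d = (a + c) * d + 2 * (b * d) := by ring
  rw [← pow_add, hexp, pow_add, pow_mul _ 2, neg_one_sq, one_pow, mul_one]

end Signs

section MatrixPowers

open Matrix

variable {κ A : Type*} [Fintype κ] [DecidableEq κ] [Semiring A]

lemma vecMulVec_add_pow_of_mulVec_eq_zero {d w : κ → A} {Q : Matrix κ κ A} (hQ : Q *ᵥ d = 0)
    (k : ℕ) :
    (vecMulVec d w + Q) ^ k =
      Q ^ k + ∑ s ∈ Finset.Icc 1 k, vecMulVec d ((w ⬝ᵥ d) ^ (k - s) • (w ᵥ* Q ^ (s - 1))) := by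
  induction k with
  | zero => simp
  | succ k ih =>
    have hstep (v : κ → A) :
        (vecMulVec d w + Q) * vecMulVec d v = vecMulVec d ((w ⬝ᵥ d) • v) := by
      rw [add_mul, vecMulVec_mul_vecMulVec, mul_vecMulVec, hQ, zero_vecMulVec, add_zero]
    rw [pow_succ', ih, mul_add, Finset.mul_sum, Finset.sum_Icc_succ_top (by lia), add_mul,
      vecMulVec_mul, ← pow_succ']
    have hsum : ∑ s ∈ Finset.Icc 1 k,
          (vecMulVec d w + Q) * vecMulVec d ((w ⬝ᵥ d) ^ (k - s) • (w ᵥ* Q ^ (s - 1))) =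
        ∑ s ∈ Finset.Icc 1 k,
          vecMulVec d ((w ⬝ᵥ d) ^ (k + 1 - s) • (w ᵥ* Q ^ (s - 1))) := by
      refine Finset.sum_congr rfl fun s hs => ?_
      rw [hstep, smul_smul, ← pow_succ', Nat.succ_sub (Finset.mem_Icc.1 hs).2]
    rw [hsum]
    simp only [Nat.sub_self, pow_zero, one_smul, Nat.add_sub_cancel]
    abel

lemma scalar_add_pow {R : A} (hR : ∀ x, Commute R x) (N : Matrix κ κ A) (k : ℕ) :
    (scalar κ R + N) ^ k = ∑ g ∈ Finset.range (k + 1), k.choose g • (R ^ g • N ^ (k - g)) := by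
  rw [(scalar_commute R hR N).add_pow]
  refine Finset.sum_congr rfl fun g _ => ?_
  rw [← Nat.cast_comm, ← nsmul_eq_mul, ← map_pow, scalar_apply, ← smul_eq_diagonal_mul]

lemma scalar_add_vecMulVec_add_pow_apply {R : A} (hR : ∀ x, Commute R x) {d w : κ → A}
    {Q : Matrix κ κ A} (hQ : Q *ᵥ d = 0) (k : ℕ) (x y : κ) :
    ((scalar κ R + (vecMulVec d w + Q)) ^ k) x y =
      ∑ g ∈ Finset.range (k + 1), k.choose g • (R ^ g * (Q ^ (k - g)) x y) +
        ∑ s ∈ Finset.Icc 1 k, d x *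
          ((∑ g ∈ Finset.range (k - s + 1), k.choose g • (R ^ g * (w ⬝ᵥ d) ^ (k - s - g))) *
            (w ᵥ* Q ^ (s - 1)) y) := by
  have hcomm (g : ℕ) (u v : A) : R ^ g * (d x * (u * v)) = d x * (R ^ g * u * v) := by
    rw [← mul_assoc, ((hR (d x)).pow_left g).eq, mul_assoc, mul_assoc]
  have hswap (g s : ℕ) : g ∈ Finset.range (k + 1) ∧ s ∈ Finset.Icc 1 (k - g) ↔
      g ∈ Finset.range (k - s + 1) ∧ s ∈ Finset.Icc 1 k := by
    simp only [Finset.mem_range, Finset.mem_Icc]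
    lia
  simp only [scalar_add_pow hR, vecMulVec_add_pow_of_mulVec_eq_zero hQ, Matrix.sum_apply,
    Matrix.add_apply, Matrix.smul_apply, smul_eq_mul, vecMulVec_apply, Pi.smul_apply, smul_add,
    Finset.sum_add_distrib, Finset.mul_sum, Finset.sum_mul, Finset.smul_sum]
  rw [Finset.sum_comm' hswap]
  simp only [hcomm, smul_mul_assoc, mul_smul_comm, Nat.sub_right_comm]

end MatrixPowers

section Extension

open Matrix

variable {κ ι A : Type*} [Fintype ι] [DecidableEq κ] [Ring A]

/-- Given `d : κ → A` with `d o = 1` and an embedding `f` of `ι` into `κ` that misses `o`, the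
square matrix over `κ` that acts as `X` on the span of the basis vectors in the range of `f`,
along the projection onto it which kills `d`. -/
def extendAlong (f : ι → κ) (o : κ) (d : κ → A) (X : Matrix ι ι A) : Matrix κ κ A :=
  (1 : Matrix κ κ A).submatrix id f * X *
    ((1 : Matrix κ κ A).submatrix f id - vecMulVec (d ∘ f) (Pi.single o 1))

variable {f : ι → κ} {o : κ} {d : κ → A}

lemma extendAlong_mulVec [Fintype κ] (ho : d o = 1) (X : Matrix ι ι A) :
    extendAlong f o d X *ᵥ d = 0 := by
  have hproj :
      ((1 : Matrix κ κ A).submatrix f id - vecMulVec (d ∘ f) (Pi.single o 1)) *ᵥ d = 0 := by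
    ext i
    simp [mulVec, dotProduct, vecMulVec_apply, one_apply, Pi.single_apply, sub_mul, ho]
  rw [extendAlong, ← mulVec_mulVec, hproj, mulVec_zero]

lemma extendAlong_pow [Fintype κ] [DecidableEq ι] (hf : f.Injective) (ho : ∀ i, f i ≠ o)
    (X : Matrix ι ι A) {l : ℕ} (hl : l ≠ 0) :
    extendAlong f o d X ^ l = extendAlong f o d (X ^ l) := by
  have hretract : ((1 : Matrix κ κ A).submatrix f id - vecMulVec (d ∘ f) (Pi.single o 1)) *
      (1 : Matrix κ κ A).submatrix id f = 1 := by
    ext i j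
    simp [mul_apply, vecMulVec_apply, one_apply, hf.eq_iff, (ho _).symm]
  induction l, Nat.one_le_iff_ne_zero.2 hl using Nat.le_induction with
  | base => simp
  | succ l hle ih =>
    rw [pow_succ', ih (Nat.one_le_iff_ne_zero.1 hle), pow_succ' X l]
    simp only [extendAlong, Matrix.mul_assoc]
    rw [← Matrix.mul_assoc _ ((1 : Matrix κ κ A).submatrix id f), hretract, Matrix.one_mul]

lemma extendAlong_apply_of_forall_ne (ho : ∀ i, f i ≠ o) (X : Matrix ι ι A) (y : κ) :
    extendAlong f o d X o y = 0 := by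
  simp [extendAlong, mul_apply, one_apply, (ho _).symm]

lemma extendAlong_apply_apply (hf : f.Injective) (ho : ∀ i, f i ≠ o) (X : Matrix ι ι A)
    (i j : ι) : extendAlong f o d X (f i) (f j) = X i j := by
  classical
  simp [extendAlong, mul_apply, one_apply, vecMulVec_apply, hf.eq_iff, ho]

lemma extendAlong_apply_base (hf : f.Injective) (ho : ∀ i, f i ≠ o) (X : Matrix ι ι A) (i : ι) :
    extendAlong f o d X (f i) o = -(X *ᵥ (d ∘ f)) i := by
  classical
  simp [extendAlong, mul_apply, one_apply, vecMulVec_apply, hf.eq_iff, ho,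
    mulVec, dotProduct]

end Extension

lemma chainF_cons {ι : Type} (a b c : ι) {k : ℕ} (v : Fin k → ι) :
    chainF a b (Fin.cons c v : Fin (k + 1) → ι) = Fin.cons a (chainF c b v) := by
  rw [chainF, chainF, ← Fin.cons_snoc_eq_snoc_cons]

/-- The matrix `((−1)^{|b|} e_ab)`. Absorbing the signs of `r_k(a,b)` into the columns turns
these elements into entries of its powers. -/
def signedMatrix {ι A : Type} [SMul ℂ A] (e : ι → ι → A) (p : ι → ℕ) : Matrix ι ι A :=
  .of fun a b => ((-1 : ℂ) ^ p b) • e a b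

section GelfandElements

variable {ι A B : Type} [Fintype ι] [DecidableEq ι] [Ring A] [Algebra ℂ A]
  [Ring B] [Algebra ℂ B]
  (e : ι → ι → A) (p : ι → ℕ)

lemma rElt_zero (a b : ι) :
    rElt e p 0 a b = if a = b then ((-1 : ℂ) ^ p b) • (1 : A) else 0 := by
  simp only [rElt]
  split_ifs with h
  · rw [h, neg_one_pow_mul_self]
  · rfl

lemma rElt_one (a b : ι) : rElt e p 1 a b = e a b := by
  simp [rElt, chainF, Fin.snoc]

lemma rElt_succ (k : ℕ) (a b : ι) :
    rElt e p (k + 1) a b = ∑ c, ((-1 : ℂ) ^ p c) • (e a c * rElt e p k c b) := by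
  cases k with
  | zero => simp [rElt_one, rElt_zero, smul_smul, neg_one_pow_mul_neg_one_pow]
  | succ k =>
    simp only [rElt, Finset.mul_sum, Finset.smul_sum]
    rw [← (Fin.consEquiv fun _ : Fin (k + 1) => ι).sum_comp, Fintype.sum_prod_type]
    refine Finset.sum_congr rfl fun c _ => Finset.sum_congr rfl fun v _ => ?_
    have hcons : (Fin.consEquiv fun _ => ι) (c, v) = Fin.cons c v := rfl
    rw [hcons, chainF_cons, List.ofFn_succ, List.prod_cons, Fin.sum_univ_succ, pow_add, mul_smul,
      mul_smul_comm]
    simp [chainF]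

lemma map_rElt (f : A →ₐ[ℂ] B) (k : ℕ) (a b : ι) :
    f (rElt e p k a b) = rElt (fun i j => f (e i j)) p k a b := by
  induction k generalizing a with
  | zero => simp [rElt_zero, apply_ite f]
  | succ k ih => simp [rElt_succ, ih]

lemma signedMatrix_pow_apply (k : ℕ) (a b : ι) :
    (signedMatrix e p ^ k) a b = ((-1 : ℂ) ^ p b) • rElt e p k a b := by
  induction k generalizing a with
  | zero => simp [rElt_zero, Matrix.one_apply, smul_smul, neg_one_pow_mul_neg_one_pow]
  | succ k ih =>
    simp only [pow_succ', Matrix.mul_apply, ih, rElt_succ, Finset.smul_sum]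
    simp only [signedMatrix, Matrix.of_apply, smul_mul_assoc, mul_smul_comm,
      smul_comm ((-1 : ℂ) ^ p b)]

lemma rElt_eq_smul_signedMatrix_pow (k : ℕ) (a b : ι) :
    rElt e p k a b = ((-1 : ℂ) ^ p b) • (signedMatrix e p ^ k) a b := by
  rw [signedMatrix_pow_apply, smul_smul, neg_one_pow_mul_neg_one_pow, one_smul]

end GelfandElements

lemma sum_update_add {α β M : Type*} [Fintype α] [DecidableEq α] [AddCommMonoid M] (f : β → M)
    (e : α → β) (i : α) (v : β) :
    ∑ t, f (Function.update e i v t) + f (e i) = ∑ t, f (e t) + f v := by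
  rw [← Finset.add_sum_erase _ _ (Finset.mem_univ i),
    ← Finset.add_sum_erase _ (fun t => f (e t)) (Finset.mem_univ i), Function.update_self,
    Finset.sum_congr rfl fun t ht => by rw [Function.update_of_ne (Finset.ne_of_mem_erase ht)]]
  abel

section Monomials

variable {m n : ℕ}

lemma hom_ext_fmono {f g : Module.End ℂ (FSp m n)} (h : ∀ x, f (fmono x) = g (fmono x)) : f = g :=
  Finsupp.lhom_ext' fun x => LinearMap.ext_ring (h x)

lemma mkOp_fmono {M : Type} [AddCommGroup M] [Module ℂ M] (g : FMon m n → M) (x : FMon m n) :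
    mkOp g (fmono x) = g x := by
  simp [mkOp, fmono]

lemma opDivE_fmono (i : Fin m) (x : FMon m n) :
    opDivE i (fmono x) = fmono (x.1 - 1, Function.update x.2.1 i (x.2.1 i + 1), x.2.2) :=
  mkOp_fmono _ _

lemma opDivO_fmono (i : Fin n) (x : FMon m n) :
    opDivO i (fmono x) = if x.2.2 i then 0 else
      ((-1 : ℂ) ^ cntB x.2.2 i) • fmono (x.1 - 1, x.2.1, Function.update x.2.2 i true) :=
  mkOp_fmono _ _

lemma opPar0_fmono (x : FMon m n) : opPar0 (fmono x) = (x.1 : ℂ) • fmono x :=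
  mkOp_fmono _ _

lemma opParE_fmono (i : Fin m) (x : FMon m n) :
    opParE i (fmono x) =
      (x.2.1 i : ℂ) • fmono (x.1 + 1, Function.update x.2.1 i (x.2.1 i - 1), x.2.2) :=
  mkOp_fmono _ _

lemma opParO_fmono (i : Fin n) (x : FMon m n) :
    opParO i (fmono x) = if x.2.2 i then
      ((-1 : ℂ) ^ cntB x.2.2 i) • fmono (x.1 + 1, x.2.1, Function.update x.2.2 i false) else 0 :=
  mkOp_fmono _ _

lemma cntB_update_self (b : Fin n → Bool) (i : Fin n) (v : Bool) :
    cntB (Function.update b i v) i = cntB b i := by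
  unfold cntB
  congr 1
  refine Finset.filter_congr fun j _ => and_congr_right fun hj => ?_
  rw [Function.update_of_ne hj.ne]

lemma neg_one_pow_cntB_update (b : Fin n → Bool) (i j : Fin n) :
    (-1 : ℂ) ^ cntB (Function.update b i !b i) j =
      (if i < j then -1 else 1) * (-1) ^ cntB b j := by
  have hprod (b : Fin n → Bool) :
      (-1 : ℂ) ^ cntB b j = ∏ t, if t < j ∧ b t = true then (-1 : ℂ) else 1 := by
    simp [cntB, Finset.prod_ite]
  rw [hprod, hprod, ← Finset.mul_prod_erase _ _ (Finset.mem_univ i),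
    ← Finset.mul_prod_erase _ (fun t => if t < j ∧ b t = true then (-1 : ℂ) else 1)
      (Finset.mem_univ i), ← mul_assoc]
  congr 1
  · cases h : b i <;> by_cases hij : i < j <;> simp [hij]
  · refine Finset.prod_congr rfl fun t ht => ?_
    rw [Function.update_of_ne (Finset.ne_of_mem_erase ht)]

end Monomials

section CommutationRelations

variable {m n : ℕ}

lemma opParE_mul_opDivE (i j : Fin m) :
    (opParE i * opDivE j : Module.End ℂ (FSp m n)) =
      opDivE j * opParE i + if i = j then 1 else 0 := by
  refine hom_ext_fmono fun ⟨z, e, b⟩ => ?_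
  rcases eq_or_ne i j with rfl | h
  · rcases Nat.eq_zero_or_pos (e i) with h0 | h0
    · have hupd : Function.update e i 0 = e := Function.update_eq_self_iff.2 h0.symm
      simp [opDivE_fmono, opParE_fmono, h0, hupd]
    · simp [opDivE_fmono, opParE_fmono, Nat.sub_add_cancel h0, add_smul]
  · simp [opDivE_fmono, opParE_fmono, h, h.symm, Function.update_comm h]

lemma commute_opParE_opDivO (i : Fin m) (j : Fin n) :
    Commute (opParE i : Module.End ℂ (FSp m n)) (opDivO j) := by
  refine hom_ext_fmono fun ⟨z, e, b⟩ => ?_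
  cases hb : b j <;> simp [opDivO_fmono, opParE_fmono, hb, smul_smul, mul_comm]

lemma commute_opParO_opDivE (i : Fin n) (j : Fin m) :
    Commute (opParO i : Module.End ℂ (FSp m n)) (opDivE j) := by
  refine hom_ext_fmono fun ⟨z, e, b⟩ => ?_
  cases hb : b i <;> simp [opDivE_fmono, opParO_fmono, hb]

lemma opDivO_opParO_fmono (i : Fin n) (x : FMon m n) :
    opDivO i (opParO i (fmono x)) = if x.2.2 i then fmono x else 0 := by
  obtain ⟨z, e, b⟩ := x
  cases hb : b i
  · simp [opParO_fmono, hb]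
  · have hupd : Function.update b i true = b := Function.update_eq_self_iff.2 hb.symm
    simp [opDivO_fmono, opParO_fmono, hb, cntB_update_self, smul_smul,
      neg_one_pow_mul_neg_one_pow, hupd]

lemma opParO_opDivO_fmono (i : Fin n) (x : FMon m n) :
    opParO i (opDivO i (fmono x)) = if x.2.2 i then 0 else fmono x := by
  obtain ⟨z, e, b⟩ := x
  cases hb : b i
  · have hupd : Function.update b i false = b := Function.update_eq_self_iff.2 hb.symm
    simp [opDivO_fmono, opParO_fmono, hb, cntB_update_self, smul_smul,
      neg_one_pow_mul_neg_one_pow, hupd]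
  · simp [opDivO_fmono, hb]

lemma opParO_mul_opDivO (i j : Fin n) :
    (opParO i * opDivO j : Module.End ℂ (FSp m n)) =
      (-1 : ℂ) • (opDivO j * opParO i) + if i = j then 1 else 0 := by
  refine hom_ext_fmono fun ⟨z, e, b⟩ => ?_
  rcases eq_or_ne i j with rfl | h
  · cases hb : b i <;> simp [opDivO_opParO_fmono, opParO_opDivO_fmono, hb]
  · have hsign : (-1 : ℂ) ^ cntB b j * (-1) ^ cntB (Function.update b j !b j) i =
        -((-1) ^ cntB b i * (-1) ^ cntB (Function.update b i !b i) j) := by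
      rw [neg_one_pow_cntB_update, neg_one_pow_cntB_update]
      rcases lt_or_gt_of_ne h with hlt | hlt <;> simp [hlt, hlt.not_gt, mul_comm]
    cases hi : b i <;> cases hj : b j <;> rw [hi, hj] at hsign <;>
      simp_all [opDivO_fmono, opParO_fmono, h.symm, smul_smul, Function.update_comm h]

end CommutationRelations

section EulerOperator

open Module.End

variable {m n : ℕ}

lemma pI_emb (c : Ind m n) : pI (emb c) = pI c := by
  cases c <;> rfl

lemma pI_z0 : pI (z0 : Ind (m + 1) n) = 0 :=
  rfl

lemma eq_z0_or_exists_eq_emb (x : Ind (m + 1) n) : x = z0 ∨ ∃ c, x = emb c := by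
  rcases x with x | x
  · exact x.cases (.inl rfl) fun i => .inr ⟨.inl i, rfl⟩
  · exact .inr ⟨.inr x, rfl⟩

lemma sum_eq_z0_add_sum_emb {M : Type*} [AddCommMonoid M] (f : Ind (m + 1) n → M) :
    ∑ x, f x = f z0 + ∑ c, f (emb c) := by
  simp only [Fintype.sum_sum_type, Fin.sum_univ_succ, add_assoc]
  rfl

lemma tdivB_z0 : tdivB (z0 : Ind (m + 1) n) = 1 :=
  rfl

lemma tdivB_emb (c : Ind m n) : tdivB (emb c) = tdiv c := by
  cases c <;> rfl

lemma tdel_z0 (y : Ind (m + 1) n) : tdel z0 y = tpar y := by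
  rw [tdel, tdivB_z0, one_mul]

lemma tdel_emb (c : Ind m n) (y : Ind (m + 1) n) : tdel (emb c) y = tdiv c * tpar y := by
  rw [tdel, tdivB_emb]

lemma opPar_emb (c : Ind m n) : opPar (emb c) = Sum.elim opParE opParO c := by
  cases c <;> rfl

lemma tpar_emb_mul_tdiv (c j : Ind m n) :
    tpar (emb c) * tdiv j =
      ((-1 : ℂ) ^ (pI c * pI j)) • (tdiv j * tpar (emb c)) + if c = j then 1 else 0 := by
  have hop : (opPar (emb c) * opDiv j : Module.End ℂ (FSp m n)) =
      ((-1 : ℂ) ^ (pI c * pI j)) • (opDiv j * opPar (emb c)) + if c = j then 1 else 0 := by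
    rcases c with c | c <;> rcases j with j | j
    · simpa [opPar_emb, opDiv, pI] using opParE_mul_opDivE c j
    · simpa [opPar_emb, opDiv, pI] using (commute_opParE_opDivO c j).eq
    · simpa [opPar_emb, opDiv, pI] using (commute_opParO_opDivE c j).eq
    · simpa [opPar_emb, opDiv, pI] using opParO_mul_opDivO c j
  refine Subtype.ext (hop.trans ?_)
  split_ifs <;> rfl

lemma ptD_eq (c j : Ind m n) : ptD c j = tpar (emb c) * tdiv j := by
  rw [ptD, tpar_emb_mul_tdiv, tdel_emb]

lemma En_eq : En m n = tpar z0 + ∑ c : Ind m n, tdiv c * tpar (emb c) := by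
  simp only [En, sum_eq_z0_add_sum_emb, tdel_z0, tdel_emb]

/-- The total degree of a monomial in all the variables `t_i`, `i ∈ Î`; the Euler operator acts
on the monomial as this scalar. -/
def monDegree (x : FMon m n) : ℤ :=
  x.1 + (∑ i, x.2.1 i + ∑ i, (x.2.2 i).toNat : ℕ)

lemma fmono_mem_eigenspace_En {x y : FMon m n} (h : monDegree x = monDegree y) :
    fmono x ∈ eigenspace (En m n : Module.End ℂ (FSp m n)) (monDegree y : ℂ) := by
  have hE (i : Fin m) : opDivE i (opParE i (fmono x)) = (x.2.1 i : ℂ) • fmono x := by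
    rcases Nat.eq_zero_or_pos (x.2.1 i) with h0 | h0
    · simp [opParE_fmono, h0]
    · simp [opDivE_fmono, opParE_fmono, Nat.sub_add_cancel h0]
  have hO (i : Fin n) : opDivO i (opParO i (fmono x)) = ((x.2.2 i).toNat : ℂ) • fmono x := by
    cases hb : x.2.2 i <;> simp [opDivO_opParO_fmono, hb]
  have hEn : (En m n : Module.End ℂ (FSp m n)) =
      opPar0 + (∑ i : Fin m, opDivE i * opParE i + ∑ i : Fin n, opDivO i * opParO i) := by
    rw [En_eq, Fintype.sum_sum_type]
    simp only [Subalgebra.coe_add, AddSubmonoidClass.coe_finsetSum]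
    rfl
  rw [mem_eigenspace_iff, ← h, hEn, monDegree]
  simp only [LinearMap.add_apply, LinearMap.sum_apply, Module.End.mul_apply, opPar0_fmono, hE, hO,
    ← Finset.sum_smul, ← add_smul]
  push_cast
  rfl

lemma commute_En_of_mem_eigenspace {f : Module.End ℂ (FSp m n)}
    (h : ∀ x, f (fmono x) ∈
      eigenspace (En m n : Module.End ℂ (FSp m n)) (monDegree x : ℂ)) :
    Commute (En m n : Module.End ℂ (FSp m n)) f := by
  refine hom_ext_fmono fun x => ?_
  rw [Module.End.mul_apply, Module.End.mul_apply, mem_eigenspace_iff.1 (h x),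
    mem_eigenspace_iff.1 (fmono_mem_eigenspace_En (rfl : monDegree x = _)), map_smul]

lemma commute_En_opDiv (j : Ind m n) : Commute (En m n : Module.End ℂ (FSp m n)) (opDiv j) := by
  refine commute_En_of_mem_eigenspace fun x => ?_
  rcases j with j | j
  · rw [opDiv, Sum.elim_inl, opDivE_fmono]
    apply fmono_mem_eigenspace_En
    have := sum_update_add id x.2.1 j (x.2.1 j + 1)
    simp only [monDegree, id] at this ⊢
    lia
  · rw [opDiv, Sum.elim_inr, opDivO_fmono]
    cases hb : x.2.2 j
    · refine Submodule.smul_mem _ _ (fmono_mem_eigenspace_En ?_)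
      have := sum_update_add Bool.toNat x.2.2 j true
      simp only [monDegree, hb, Bool.toNat_false, Bool.toNat_true] at this ⊢
      lia
    · exact Submodule.zero_mem _

lemma commute_En_opPar (j : Ind (m + 1) n) :
    Commute (En m n : Module.End ℂ (FSp m n)) (opPar j) := by
  refine commute_En_of_mem_eigenspace fun x => ?_
  obtain rfl | ⟨j | j, rfl⟩ := eq_z0_or_exists_eq_emb j
  · change opPar0 _ ∈ _
    rw [opPar0_fmono]
    exact Submodule.smul_mem _ _ (fmono_mem_eigenspace_En rfl)
  · rw [opPar_emb, Sum.elim_inl, opParE_fmono]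
    rcases Nat.eq_zero_or_pos (x.2.1 j) with h0 | h0
    · simp [h0]
    · refine Submodule.smul_mem _ _ (fmono_mem_eigenspace_En ?_)
      have := sum_update_add id x.2.1 j (x.2.1 j - 1)
      simp only [monDegree, id] at this ⊢
      lia
  · rw [opPar_emb, Sum.elim_inr, opParO_fmono]
    cases hb : x.2.2 j
    · exact Submodule.zero_mem _
    · refine Submodule.smul_mem _ _ (fmono_mem_eigenspace_En ?_)
      have := sum_update_add Bool.toNat x.2.2 j false
      simp only [monDegree, hb, Bool.toNat_false, Bool.toNat_true] at this ⊢
      lia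

lemma commute_En (x : Dprime m n) : Commute (En m n) x := by
  have hle : Dprime m n ≤
      Subalgebra.centralizer ℂ {(En m n : Module.End ℂ (FSp m n))} := by
    refine Algebra.adjoin_le ?_
    rintro _ (⟨j, rfl⟩ | ⟨j, rfl⟩) <;> rintro _ rfl
    · exact commute_En_opDiv j
    · exact commute_En_opPar j
  exact Subtype.ext (hle x.2 _ rfl)

end EulerOperator

section EnvelopingAlgebra

variable {ι : Type} [DecidableEq ι]

lemma adjoin_range_gen (p : ι → ℕ) :
    Algebra.adjoin ℂ (Set.range fun ij : ι × ι => gen p ij.1 ij.2) = ⊤ := by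
  have hrange : (Set.range fun ij : ι × ι => gen p ij.1 ij.2) =
      RingQuot.mkAlgHom ℂ (glRel ι p) '' Set.range (FreeAlgebra.ι ℂ) := by
    rw [← Set.range_comp]
    rfl
  rw [hrange, ← AlgHom.map_adjoin, FreeAlgebra.adjoin_range_ι, Algebra.map_top,
    AlgHom.range_eq_top]
  exact RingQuot.mkAlgHom_surjective ℂ _

lemma commute_map_of_commute_map_gen {A : Type} [Ring A] [Algebra ℂ A] {p : ι → ℕ}
    (f : UEA ι p →ₐ[ℂ] A) {x : A} (h : ∀ i j, Commute x (f (gen p i j)))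
    (u : UEA ι p) : Commute x (f u) := by
  have hle : ⊤ ≤ (Subalgebra.centralizer ℂ {x}).comap f := by
    rw [← adjoin_range_gen p]
    refine Algebra.adjoin_le ?_
    rintro _ ⟨⟨i, j⟩, rfl⟩ _ rfl
    exact h i j
  exact hle (Algebra.mem_top (x := u)) _ rfl

end EnvelopingAlgebra

section Centrality

variable {m n : ℕ} (ST : SuperTensor m n)

lemma commute_inD_En_inU (u : UEA (Ind m n) pI) : Commute (ST.inD (En m n)) (ST.inU u) := by
  refine commute_map_of_commute_map_gen _ (fun i j => ?_) u
  rw [En_eq, map_add, map_sum]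
  refine .add_left ?_ (.sum_left _ _ _ fun c _ => ?_)
  · have hpar := ST.comm_par i j z0
    rw [pI_z0, mul_zero, pow_zero, one_smul] at hpar
    exact hpar.symm
  · have hpar := ST.comm_par i j (emb c)
    rw [pI_emb] at hpar
    refine Eq.symm ?_
    rw [map_mul, ← mul_assoc, ST.comm_div, smul_mul_assoc, mul_assoc, hpar, mul_smul_comm,
      smul_smul, neg_one_pow_mul_neg_one_pow, one_smul, mul_assoc]

lemma commute_R2elt (x : ST.T) : Commute (R2elt ST) x := by
  refine .add_left ?_ ((Commute.one_left x).smul_left _)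
  obtain ⟨t, rfl⟩ := ST.equiv.surjective x
  induction t using TensorProduct.induction_on with
  | zero => rw [map_zero]; exact .zero_right _
  | tmul d u =>
    rw [ST.equiv_tmul]
    exact ((commute_En d).map ST.inD).mul_right (commute_inD_En_inU ST u)
  | add x y hx hy => rw [map_add]; exact hx.add_right hy

lemma commute_AkT {R : ST.T} (hR : ∀ x, Commute R x) (k s : ℕ) (x : ST.T) :
    Commute (AkT ST R k s) x :=
  .sum_left _ _ _ fun g _ =>
    (((hR x).pow_left g).mul_left ((commute_R2elt ST x).pow_left _)).smul_left _

lemma inU_rElt_mul_inD_tdiv (k : ℕ) (a b c : Ind m n) :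
    ST.inU (rElt (gen pI) pI k a b) * ST.inD (tdiv c) =
      ((-1 : ℂ) ^ ((pI a + pI b) * pI c)) •
        (ST.inD (tdiv c) * ST.inU (rElt (gen pI) pI k a b)) := by
  induction k generalizing a with
  | zero =>
    rw [rElt_zero]
    split_ifs with h
    · simp [h, ← two_mul, mul_assoc, pow_mul]
    · simp
  | succ k ih =>
    simp only [rElt_succ, map_sum, map_smul, map_mul, Finset.sum_mul, Finset.mul_sum,
      Finset.smul_sum]
    refine Finset.sum_congr rfl fun j _ => ?_
    rw [smul_mul_assoc, mul_assoc, ih, mul_smul_comm, ← mul_assoc, ST.comm_div, smul_mul_assoc,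
      smul_smul (_ ^ ((pI j + _) * _)), mul_comm (_ ^ ((pI j + _) * _)),
      neg_one_pow_add_mul_telescope, smul_comm, mul_assoc, mul_smul_comm]

end Centrality

section MatrixModel

open Matrix

variable {m n : ℕ} (ST : SuperTensor m n)

/-- The column vector `(t_x/t_0 ⊗ 1)`, `x ∈ Î`. -/
def coordCol : Ind (m + 1) n → ST.T := fun x => ST.inD (tdivB x)

/-- The row vector of signed derivations `((−1)^{|y|} t_0∂_y ⊗ 1)`, `y ∈ Î`. -/
def derivRow : Ind (m + 1) n → ST.T := fun y => ((-1 : ℂ) ^ pI y) • ST.inD (tpar y)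

/-- The signed matrix of generators of `gl(m|n)`, with entries in `D'(m|n) ⊗ U(gl(m|n))`. -/
def glMatrix : Matrix (Ind m n) (Ind m n) ST.T :=
  signedMatrix (fun a b => ST.inU (gen pI a b)) pI

/-- The part of the signed matrix `(φ_R(e_xy))` that comes from `gl(m|n)`; its column `0` is
determined by the requirement that it kills `coordCol`. -/
def glExtension : Matrix (Ind (m + 1) n) (Ind (m + 1) n) ST.T :=
  extendAlong emb z0 (coordCol ST) (glMatrix ST)

lemma coordCol_z0 : coordCol ST z0 = 1 := by
  rw [coordCol, tdivB_z0, map_one]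

lemma derivRow_dotProduct_coordCol : derivRow ST ⬝ᵥ coordCol ST = R2elt ST := by
  have hemb (c : Ind m n) : derivRow ST (emb c) * coordCol ST (emb c) =
      ST.inD (tdiv c * tpar (emb c)) + ((-1 : ℂ) ^ pI c) • 1 := by
    simp [derivRow, coordCol, tdivB_emb, pI_emb, ← map_mul ST.inD (tpar _), tpar_emb_mul_tdiv,
      smul_smul, neg_one_pow_mul_self, neg_one_pow_mul_neg_one_pow]
  have hsuper : ∑ c : Ind m n, ((-1 : ℂ) ^ pI c) • (1 : ST.T) = ((m : ℂ) - n) • 1 := by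
    rw [← Finset.sum_smul, Fintype.sum_sum_type]
    simp [pI, sub_eq_add_neg]
  rw [dotProduct, sum_eq_z0_add_sum_emb, coordCol_z0, mul_one]
  simp only [hemb, Finset.sum_add_distrib, hsuper]
  rw [R2elt, En_eq, map_add, map_sum, derivRow, pI_z0, pow_zero, one_smul, add_assoc]

lemma glMatrix_pow_apply (l : ℕ) (a b : Ind m n) :
    (glMatrix ST ^ l) a b = ((-1 : ℂ) ^ pI b) • ST.inU (rElt (gen pI) pI l a b) := by
  rw [glMatrix, signedMatrix_pow_apply, map_rElt]

lemma glMatrix_pow_mulVec_coordCol (l : ℕ) (a : Ind m n) :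
    (glMatrix ST ^ l *ᵥ (coordCol ST ∘ emb)) a =
      ∑ j, ((-1 : ℂ) ^ (pI a * pI j)) •
        (ST.inD (tdiv j) * ST.inU (rElt (gen pI) pI l a j)) := by
  rw [mulVec, dotProduct]
  refine Finset.sum_congr rfl fun j _ => ?_
  rw [glMatrix_pow_apply, Function.comp_apply, coordCol, tdivB_emb, smul_mul_assoc,
    inU_rElt_mul_inD_tdiv, smul_smul, add_mul, pow_add, neg_one_pow_mul_self, mul_left_comm,
    neg_one_pow_mul_neg_one_pow, mul_one]

lemma glExtension_mulVec_coordCol : glExtension ST *ᵥ coordCol ST = 0 :=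
  extendAlong_mulVec (coordCol_z0 ST) _

lemma glExtension_pow {l : ℕ} (hl : l ≠ 0) :
    glExtension ST ^ l = extendAlong emb z0 (coordCol ST) (glMatrix ST ^ l) :=
  extendAlong_pow emb_injective emb_ne_z0 _ hl

lemma glExtension_pow_emb_emb (l : ℕ) (a b : Ind m n) :
    (glExtension ST ^ l) (emb a) (emb b) = (glMatrix ST ^ l) a b := by
  rcases eq_or_ne l 0 with rfl | hl
  · simp [one_apply, emb_injective.eq_iff]
  · rw [glExtension_pow ST hl, extendAlong_apply_apply emb_injective emb_ne_z0]

lemma glExtension_pow_z0_emb (l : ℕ) (b : Ind m n) :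
    (glExtension ST ^ l) z0 (emb b) = 0 := by
  rcases eq_or_ne l 0 with rfl | hl
  · exact one_apply_ne (emb_ne_z0 b).symm
  · rw [glExtension_pow ST hl, extendAlong_apply_of_forall_ne emb_ne_z0]

lemma glExtension_pow_z0_z0 {l : ℕ} (hl : l ≠ 0) : (glExtension ST ^ l) z0 z0 = 0 := by
  rw [glExtension_pow ST hl, extendAlong_apply_of_forall_ne emb_ne_z0]

lemma glExtension_pow_emb_z0 {l : ℕ} (hl : l ≠ 0) (a : Ind m n) :
    (glExtension ST ^ l) (emb a) z0 =
      -∑ j, ((-1 : ℂ) ^ (pI a * pI j)) •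
        (ST.inD (tdiv j) * ST.inU (rElt (gen pI) pI l a j)) := by
  rw [glExtension_pow ST hl, extendAlong_apply_base emb_injective emb_ne_z0,
    glMatrix_pow_mulVec_coordCol]

lemma derivRow_vecMul_glExtension_pow_emb (l : ℕ) (b : Ind m n) :
    ((-1 : ℂ) ^ pI b) • (derivRow ST ᵥ* glExtension ST ^ l) (emb b) = fsT ST (l + 1) z0 b := by
  rw [vecMul, dotProduct, sum_eq_z0_add_sum_emb, glExtension_pow_z0_emb, mul_zero, zero_add,
    Finset.smul_sum]
  refine Finset.sum_congr rfl fun i _ => ?_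
  rw [glExtension_pow_emb_emb, glMatrix_pow_apply, mul_smul_comm, smul_smul,
    neg_one_pow_mul_neg_one_pow, one_smul, derivRow, pI_emb, smul_mul_assoc, tdel_z0,
    Nat.add_sub_cancel]

lemma derivRow_vecMul_glExtension_pow_z0 {l : ℕ} (hl : l ≠ 0) :
    (derivRow ST ᵥ* glExtension ST ^ l) z0 = -BT ST (l + 1) := by
  rw [vecMul, dotProduct, sum_eq_z0_add_sum_emb, glExtension_pow_z0_z0 ST hl, mul_zero, zero_add,
    BT, ← Finset.sum_neg_distrib]
  refine Finset.sum_congr rfl fun i _ => ?_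
  rw [glExtension_pow_emb_z0 ST hl, mul_neg, Finset.mul_sum]
  congr 1
  refine Finset.sum_congr rfl fun j _ => ?_
  rw [derivRow, pI_emb, smul_mul_assoc, mul_smul_comm, smul_smul, ← mul_assoc, ← map_mul,
    ← ptD_eq, mul_add, mul_one, pow_add, Nat.add_sub_cancel]

variable {ST} {R : ST.T} {φ : UEA (Ind (m + 1) n) pI →ₐ[ℂ] ST.T}

lemma IsPhi.signedMatrix_eq (hφ : IsPhi ST R φ) :
    signedMatrix (fun x y => φ (gen pI x y)) pI =
      scalar _ R + (vecMulVec (coordCol ST) (derivRow ST) + glExtension ST) := by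
  obtain ⟨hee, hez, hze, hzz⟩ := hφ
  ext x y
  simp only [signedMatrix, of_apply, Matrix.add_apply, vecMulVec_apply, scalar_apply]
  rw [← pow_one (glExtension ST)]
  obtain rfl | ⟨a, rfl⟩ := eq_z0_or_exists_eq_emb x <;>
    obtain rfl | ⟨b, rfl⟩ := eq_z0_or_exists_eq_emb y
  · rw [hzz, diagonal_apply_eq, glExtension_pow_z0_z0 ST one_ne_zero, derivRow,
      coordCol_z0, tdel_z0, pI_z0]
    simp [add_comm]
  · rw [hze, diagonal_apply_ne _ (emb_ne_z0 b).symm, glExtension_pow_z0_emb, derivRow,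
      coordCol_z0, tdel_z0]
    simp
  · rw [hez, diagonal_apply_ne _ (emb_ne_z0 a), glExtension_pow_emb_z0 ST one_ne_zero, derivRow,
      coordCol, pI_z0, tdel, map_mul]
    simp [rElt_one, sub_eq_add_neg]
  · rw [hee, glExtension_pow_emb_emb, glMatrix_pow_apply, rElt_one, derivRow, coordCol, tdel,
      map_mul, pI_emb, diagonal_apply]
    rcases eq_or_ne a b with rfl | h
    · simp [smul_smul, neg_one_pow_mul_self, neg_one_pow_mul_neg_one_pow, add_comm]
    · simp [h, emb_injective.ne h]

lemma IsPhi.map_rElt_eq (hφ : IsPhi ST R φ) (hR : ∀ x, Commute R x) (k : ℕ)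
    (x y : Ind (m + 1) n) :
    φ (rElt (gen pI) pI k x y) =
      ∑ g ∈ Finset.range (k + 1), (k.choose g : ℂ) •
          (R ^ g * ((-1 : ℂ) ^ pI y) • (glExtension ST ^ (k - g)) x y) +
        ∑ s ∈ Finset.Icc 1 k, ST.inD (tdivB x) *
          (AkT ST R k s * ((-1 : ℂ) ^ pI y) • (derivRow ST ᵥ* glExtension ST ^ (s - 1)) y) := by
  rw [map_rElt, rElt_eq_smul_signedMatrix_pow, hφ.signedMatrix_eq,
    scalar_add_vecMulVec_add_pow_apply hR (glExtension_mulVec_coordCol ST),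
    derivRow_dotProduct_coordCol]
  simp only [smul_add, Finset.smul_sum, mul_smul_comm, Nat.cast_smul_eq_nsmul, AkT, coordCol,
    smul_comm ((-1 : ℂ) ^ pI y)]

lemma inD_tdivB_mul_fsT (s : ℕ) (x : Ind (m + 1) n) (b : Ind m n) :
    ST.inD (tdivB x) * fsT ST s z0 b = fsT ST s x b := by
  simp only [fsT, Finset.mul_sum, mul_smul_comm, ← mul_assoc, ← map_mul, tdel_z0]
  rfl

lemma IsPhi.map_rElt_emb (hφ : IsPhi ST R φ) (hR : ∀ x, Commute R x) (k : ℕ)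
    (x : Ind (m + 1) n) (b : Ind m n) :
    φ (rElt (gen pI) pI k x (emb b)) =
      FkT ST R k x b + ∑ g ∈ Finset.range (k + 1), (k.choose g : ℂ) •
        (R ^ g * ((-1 : ℂ) ^ pI b) • (glExtension ST ^ (k - g)) x (emb b)) := by
  rw [hφ.map_rElt_eq hR, add_comm, FkT, pI_emb]
  congr 1
  refine Finset.sum_congr rfl fun s hs => ?_
  rw [derivRow_vecMul_glExtension_pow_emb, Nat.sub_add_cancel (Finset.mem_Icc.1 hs).1,
    (commute_AkT ST hR k s _).eq, ← mul_assoc, inD_tdivB_mul_fsT]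

lemma IsPhi.map_rElt_z0 (hφ : IsPhi ST R φ) (hR : ∀ x, Commute R x) {k : ℕ} (hk : 0 < k)
    (x : Ind (m + 1) n) :
    φ (rElt (gen pI) pI k x z0) =
      AkT ST R k 1 * ST.inD (tdel x z0) +
        ∑ g ∈ Finset.range (k + 1), (k.choose g : ℂ) •
          (R ^ g * (glExtension ST ^ (k - g)) x z0) -
        ST.inD (tdivB x) * ∑ s ∈ Finset.Icc 2 k, AkT ST R k s * BT ST s := by
  have hB : ∀ s ∈ Finset.Icc 2 k,
      ST.inD (tdivB x) * (AkT ST R k s * (derivRow ST ᵥ* glExtension ST ^ (s - 1)) z0) =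
        -(ST.inD (tdivB x) * (AkT ST R k s * BT ST s)) := by
    intro s hs
    have hs2 := (Finset.mem_Icc.1 hs).1
    rw [derivRow_vecMul_glExtension_pow_z0 ST (by lia), Nat.sub_add_cancel (by lia), mul_neg,
      mul_neg]
  have hA : ST.inD (tdivB x) * (AkT ST R k 1 * derivRow ST z0) =
      AkT ST R k 1 * ST.inD (tdel x z0) := by
    rw [derivRow, pI_z0, pow_zero, one_smul, ← mul_assoc, ← (commute_AkT ST hR k 1 _).eq,
      mul_assoc, ← map_mul, tdel]
  have hIcc : Finset.Ioc 1 k = Finset.Icc 2 k := (Finset.Icc_add_one_left_eq_Ioc 1 k).symm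
  rw [hφ.map_rElt_eq hR, pI_z0]
  simp only [pow_zero, one_smul]
  rw [← Finset.add_sum_Ioc_eq_sum_Icc hk, hIcc, Finset.sum_congr rfl hB, Nat.sub_self, pow_zero,
    vecMul_one, hA, Finset.sum_neg_distrib, Finset.mul_sum]
  abel

lemma IsPhi.map_rElt_emb_emb (hφ : IsPhi ST R φ) (hR : ∀ x, Commute R x) (k : ℕ)
    (a b : Ind m n) :
    φ (rElt (gen pI) pI k (emb a) (emb b)) = FkT ST R k (emb a) b + DkT ST R k a b := by
  simp only [hφ.map_rElt_emb hR, glExtension_pow_emb_emb, glMatrix_pow_apply, smul_smul,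
    neg_one_pow_mul_neg_one_pow, one_smul, DkT]

lemma IsPhi.map_rElt_z0_emb (hφ : IsPhi ST R φ) (hR : ∀ x, Commute R x) (k : ℕ)
    (b : Ind m n) : φ (rElt (gen pI) pI k z0 (emb b)) = FkT ST R k z0 b := by
  simp [hφ.map_rElt_emb hR, glExtension_pow_z0_emb]

lemma IsPhi.map_rElt_emb_z0 (hφ : IsPhi ST R φ) (hR : ∀ x, Commute R x) {k : ℕ} (hk : 0 < k)
    (a : Ind m n) :
    φ (rElt (gen pI) pI k (emb a) z0) =
      AkT ST R k 1 * ST.inD (tdel (emb a) z0) - EkT ST R k a -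
        ST.inD (tdiv a) * ∑ s ∈ Finset.Icc 2 k, AkT ST R k s * BT ST s := by
  have hE : ∑ g ∈ Finset.range (k + 1), (k.choose g : ℂ) •
      (R ^ g * (glExtension ST ^ (k - g)) (emb a) z0) = -EkT ST R k a := by
    rw [Finset.sum_range_succ, Nat.sub_self, pow_zero, one_apply_ne (emb_ne_z0 a), mul_zero,
      smul_zero, add_zero, EkT, ← Finset.sum_neg_distrib]
    refine Finset.sum_congr rfl fun g hg => ?_
    rw [glExtension_pow_emb_z0 ST (Nat.sub_ne_zero_of_lt (Finset.mem_range.1 hg)), mul_neg,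
      smul_neg]
  rw [hφ.map_rElt_z0 hR hk, hE, tdivB_emb, ← sub_eq_add_neg]

lemma IsPhi.map_rElt_z0_z0 (hφ : IsPhi ST R φ) (hR : ∀ x, Commute R x) {k : ℕ} (hk : 0 < k) :
    φ (rElt (gen pI) pI k z0 z0) =
      AkT ST R k 1 * ST.inD (tdel z0 z0) + R ^ k -
        ∑ s ∈ Finset.Icc 2 k, AkT ST R k s * BT ST s := by
  have hR_pow : ∑ g ∈ Finset.range (k + 1), (k.choose g : ℂ) •
      (R ^ g * (glExtension ST ^ (k - g)) z0 z0) = R ^ k := by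
    rw [Finset.sum_range_succ, Finset.sum_eq_zero fun g hg => by
      rw [glExtension_pow_z0_z0 ST (Nat.sub_ne_zero_of_lt (Finset.mem_range.1 hg)), mul_zero,
        smul_zero]]
    simp
  rw [hφ.map_rElt_z0 hR hk, hR_pow, tdivB_z0, map_one, one_mul]

end MatrixModel

/-- Theorem B.1.  Explicit formulas for the images under `φ_R` of the
elements `r_k^{gl(m+1|n)}(a,b)`, `a, b ∈ Î`. -/
theorem stmt18 (m n : ℕ) (ST : SuperTensor m n) (R : ST.T)
    (hR : R ∈ Subalgebra.center ℂ ST.T)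
    (φ : UEA (Ind (m+1) n) pI →ₐ[ℂ] ST.T) (hφ : IsPhi ST R φ)
    (k : ℕ) (hk : 0 < k) (a b : Ind m n) :
    (φ (rElt (gen pI) pI k (emb a) (emb b)) = FkT ST R k (emb a) b + DkT ST R k a b) ∧
    (φ (rElt (gen pI) pI k (emb a) z0) =
      AkT ST R k 1 * ST.inD (tdel (emb a) z0) - EkT ST R k a
        - ST.inD (tdiv a) * ∑ s ∈ Finset.Icc 2 k, AkT ST R k s * BT ST s) ∧
    (φ (rElt (gen pI) pI k z0 (emb b)) = FkT ST R k z0 b) ∧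
    (φ (rElt (gen pI) pI k z0 z0) =
      AkT ST R k 1 * ST.inD (tdel (m := m) (n := n) z0 z0) + R ^ k
        - ∑ s ∈ Finset.Icc 2 k, AkT ST R k s * BT ST s) := by
  have hR' (x : ST.T) : Commute R x := (Subalgebra.mem_center_iff.1 hR x).symm
  exact ⟨hφ.map_rElt_emb_emb hR' k a b, hφ.map_rElt_emb_z0 hR' hk a,
    hφ.map_rElt_z0_emb hR' k b, hφ.map_rElt_z0_z0 hR' hk⟩
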